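/- Suppose F satisfies (G1) and (G2). Let μ ∈ L_θ^+ be a positive measure with a disintegration ω, and let Γ^ω_{F_*μ} be the path representing F^*μ given by the transfer formula Γ^ω_{F_*μ}(γ) = Σ_{i=1}^N 1_{σ([i])}(γ) · (F_{iγ})_*(μ|_{iγ}) · g_i(iγ), where iγ denotes γ with the symbol i prepended. Then |Γ^ω_{F_*μ}|_θ^ω ≤ θ |μ|_θ^ω + C₁ ‖μ‖_∞, where C₁ = max{Hθ + θN|g|_θ, 2}. -/

import Mathlib

open MeasureTheory ENNReal Set

namespace RDS

/-- The one-sided subshift of finite type `Σ_A^+` determined by the 0-1 matrix `A`. -/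
abbrev SigmaA (N : ℕ) (A : Fin N → Fin N → Bool) :=
  {x : ℕ → Fin N // ∀ i, A (x i) (x (i + 1)) = true}

variable {N : ℕ} {A : Fin N → Fin N → Bool}

/-- The shift map `σ` on `Σ_A^+`. -/
def shift (x : SigmaA N A) : SigmaA N A :=
  ⟨fun i => x.val (i + 1), fun i => x.prop (i + 1)⟩

/-- Aperiodicity of a 0-1 matrix: some power has all entries positive. -/
def Aperiodic (A : Fin N → Fin N → Bool) : Prop :=
  ∃ k : ℕ, 0 < k ∧ ∀ i j,
    0 < ((Matrix.of fun a b => if A a b then (1 : ℕ) else 0) ^ k) i j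

/-- The metric `d_θ(x,y) = Σ_i θ^i (1 - δ(x_i, y_i))` on `Σ_A^+`. -/
noncomputable def dTheta (θ : ℝ) (x y : SigmaA N A) : ℝ :=
  ∑' i : ℕ, θ ^ i * (if x.val i = y.val i then (0 : ℝ) else 1)

/-- Cylinder sets of `Σ_A^+`. -/
def cylinder (n : ℕ) (w : Fin (n + 1) → Fin N) : Set (SigmaA N A) :=
  {x | ∀ i : Fin (n + 1), x.val i = w i}

/-- `m` is a Markov measure on `Σ_A^+` compatible with `A`: it is given on
cylinders by a stochastic matrix `P` (vanishing where `A` vanishes) and a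
stationary probability vector `p`. -/
def IsMarkov (m : Measure (SigmaA N A)) : Prop :=
  ∃ (p : Fin N → ℝ≥0∞) (P : Fin N → Fin N → ℝ≥0∞),
    (∑ i, p i = 1) ∧ (∀ i, ∑ j, P i j = 1) ∧ (∀ j, ∑ i, p i * P i j = p j) ∧
    (∀ i j, A i j = false → P i j = 0) ∧
    ∀ (n : ℕ) (w : Fin (n + 1) → Fin N),
      m (cylinder n w) = p (w 0) * ∏ i : Fin n, P (w i.castSucc) (w i.succ)

/-- `σ_i⁻¹(γ)`: the sequence `γ` with the symbol `i` prepended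
(defined when `A i γ₀ = 1`), i.e. the inverse branch of the restriction `σ_i`
of `σ` to the cylinder `[i]`. -/
def prepend (i : Fin N) (x : SigmaA N A) (h : A i (x.val 0) = true) : SigmaA N A :=
  ⟨fun n => match n with
    | 0 => i
    | Nat.succ k => x.val k,
   fun j => match j with
    | 0 => h
    | Nat.succ k => x.prop k⟩

/-- `f` is `L`-Lipschitz with respect to the distance function `d`. -/
def LipWithD {X : Type*} (d : X → X → ℝ) (L : ℝ) (f : X → ℝ) : Prop :=
  ∀ x y, |f x - f y| ≤ L * d x y

/-- `f` is Lipschitz with respect to the distance function `d`. -/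
def LipD {X : Type*} (d : X → X → ℝ) (f : X → ℝ) : Prop :=
  ∃ L : ℝ, LipWithD d L f

/-- The best Lipschitz constant of `f` with respect to `d` (valued in `ℝ≥0∞`). -/
noncomputable def lipConst {X : Type*} (d : X → X → ℝ) (f : X → ℝ) : ℝ≥0∞ :=
  ⨆ (x : X) (y : X), ENNReal.ofReal (|f x - f y| / d x y)

/-- The sup norm of `f` (valued in `ℝ≥0∞`). -/
noncomputable def supNormE {X : Type*} (f : X → ℝ) : ℝ≥0∞ :=
  ⨆ x : X, ENNReal.ofReal |f x|

/-- The norm `‖f‖_θ = ‖f‖_∞ + Lip_d(f)`. -/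
noncomputable def thetaNorm {X : Type*} (d : X → X → ℝ) (f : X → ℝ) : ℝ≥0∞ :=
  supNormE f + lipConst d f

/-- The Perron-Frobenius operator duality characterizing `P_σ`:
`∫ P_σ(φ) · ψ dm = ∫ φ · (ψ ∘ σ) dm` for integrable `φ` and bounded measurable `ψ`. -/
def IsPerronFrobenius (m : Measure (SigmaA N A))
    (Pσ : (SigmaA N A → ℝ) → SigmaA N A → ℝ) : Prop :=
  ∀ φ ψ : SigmaA N A → ℝ, Integrable φ m → Measurable ψ → (∃ C, ∀ x, |ψ x| ≤ C) →
    ∫ x, Pσ φ x * ψ x ∂m = ∫ x, φ x * ψ (shift x) ∂m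

/-- Spectral gap for `P_σ` on `d_θ`-Lipschitz functions with constants `D`, `r`:
`‖P_σ^n φ‖_θ ≤ D r^n ‖φ‖_θ` for all `n` and all `d_θ`-Lipschitz `φ` with
`∫ φ dm = 0`. -/
def HasGap (m : Measure (SigmaA N A)) (θ : ℝ)
    (Pσ : (SigmaA N A → ℝ) → SigmaA N A → ℝ) (D r : ℝ) : Prop :=
  ∀ φ : SigmaA N A → ℝ, LipD (dTheta θ) φ → (∫ x, φ x ∂m) = 0 →
    ∀ n : ℕ, thetaNorm (dTheta θ) (Pσ^[n] φ) ≤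
      ENNReal.ofReal (D * r ^ n) * thetaNorm (dTheta θ) φ

/-- `Jm i` is the Jacobian `J_{m,σ_i}` of `m` with respect to the branch `σ_i`
(the restriction of `σ` to the cylinder `[i]`): `m (σ_i(E)) = ∫_E J_{m,σ_i} dm`
for every measurable `E` (intersected with `[i]`). -/
def IsJacobian (m : Measure (SigmaA N A)) (Jm : Fin N → SigmaA N A → ℝ) : Prop :=
  ∀ (i : Fin N) (E : Set (SigmaA N A)), MeasurableSet E →
    m {γ : SigmaA N A | ∃ h : A i (γ.val 0) = true, prepend i γ h ∈ E} =
      ∫⁻ x in E ∩ {x : SigmaA N A | x.val 0 = i}, ENNReal.ofReal (Jm i x) ∂m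

variable {K : Type*} [MetricSpace K] [MeasurableSpace K]

/-- The Wasserstein-Kantorovich like distance `W(ν₁,ν₂)`: the supremum of
`|∫ g dν₁ - ∫ g dν₂|` over `g : K → ℝ` with `Lip(g) ≤ 1` and `‖g‖_∞ ≤ 1`.
Applied with `ν₂ = 0` it gives the norm `‖ν₁‖_W`; applied to the two parts of a
decomposition of a signed measure it gives its `‖·‖_W` norm. -/
noncomputable def wDist (ν₁ ν₂ : Measure K) : ℝ≥0∞ :=
  ⨆ g : {g : K → ℝ // LipschitzWith 1 g ∧ ∀ z, |g z| ≤ 1},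
    ENNReal.ofReal |∫ z, g.val z ∂ν₁ - ∫ z, g.val z ∂ν₂|

/-- The skew product `F(x,z) = (σ(x), G(x,z))`. -/
def skew (G : SigmaA N A × K → K) (p : SigmaA N A × K) : SigmaA N A × K :=
  (shift p.1, G p)

/-- The transfer operator `F^* μ (E) = μ (F⁻¹ E)` acting on signed measures. -/
noncomputable def transfer (G : SigmaA N A × K → K)
    (μ : SignedMeasure (SigmaA N A × K)) : SignedMeasure (SigmaA N A × K) :=
  μ.map (skew G)

/-- Condition (G1): uniform contraction of the vertical fibers with rate `α`. -/
def CondG1 (G : SigmaA N A × K → K) (α : ℝ) : Prop :=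
  ∀ (x : SigmaA N A) (z₁ z₂ : K), dist (G (x, z₁)) (G (x, z₂)) ≤ α * dist z₁ z₂

/-- Condition (G2): `x ↦ G(x,z)` is `d_θ`-Lipschitz with constant `H`,
uniformly in `z`. -/
def CondG2 (θ : ℝ) (G : SigmaA N A × K → K) (H : ℝ) : Prop :=
  ∀ (z : K) (x y : SigmaA N A), dist (G (x, z)) (G (y, z)) ≤ H * dTheta θ x y

/-- `T` is (the path `γ ↦ μ|_γ` of) a disintegration of `μ` along the vertical
fibers, over the reference measure `m`: `μ(E) = ∫ (μ|_γ)(E ∩ γ) dm(γ)`. -/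
def IsDisint (m : Measure (SigmaA N A)) (μ : Measure (SigmaA N A × K))
    (T : SigmaA N A → Measure K) : Prop :=
  (∀ E : Set (SigmaA N A × K), MeasurableSet E →
      μ E = ∫⁻ γ, T γ {z | (γ, z) ∈ E} ∂m) ∧
  ∀ E : Set K, MeasurableSet E → Measurable fun γ => T γ E

/-- The (essential) `‖·‖_W`-Lipschitz constant of a path of measures,
`|Γ|_θ^ω = ess sup_{γ₁ ≠ γ₂} ‖Γ(γ₁) - Γ(γ₂)‖_W / d_θ(γ₁,γ₂)`. -/
noncomputable def pathLip (m : Measure (SigmaA N A)) (θ : ℝ)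
    (T : SigmaA N A → Measure K) : ℝ≥0∞ :=
  essSup (fun p : SigmaA N A × SigmaA N A =>
    wDist (T p.1) (T p.2) / ENNReal.ofReal (dTheta θ p.1 p.2)) (m.prod m)

/-- The Lipschitz constant `|μ|_θ` of a positive measure: the infimum over
disintegrations `ω` of `μ` of `|μ|_θ^ω`. -/
noncomputable def lipDisint (m : Measure (SigmaA N A)) (θ : ℝ)
    (μ : Measure (SigmaA N A × K)) : ℝ≥0∞ :=
  ⨅ T : {T : SigmaA N A → Measure K // IsDisint m μ T}, pathLip m θ T.val

/-- The fiberwise transfer formula: the path representing `F^*μ` induced by the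
path `T` representing `μ`, i.e.
`γ ↦ Σ_i 1_{σ([i])}(γ) (F_{iγ})_*(T(iγ)) / J_{m,σ_i}(iγ)`. -/
noncomputable def transferPath (G : SigmaA N A × K → K) (Jm : Fin N → SigmaA N A → ℝ)
    (T : SigmaA N A → Measure K) : SigmaA N A → Measure K :=
  fun γ => ∑ i : Fin N, if h : A i (γ.val 0) = true then
      ENNReal.ofReal ((Jm i (prepend i γ h))⁻¹) •
        ((T (prepend i γ h)).map fun z => G (prepend i γ h, z))
    else 0

variable [BorelSpace K] [CompactSpace K] [Nonempty K]

/-- The fiberwise restriction `μ|_γ = π₂_* (φ₁(γ) μ_γ)` of a finite positive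
measure `μ` on `Σ_A^+ × K`, where `({μ_γ}_γ, φ₁ m)` is the Rokhlin
disintegration of `μ` along the vertical fibers and `φ₁ = d(π₁_*μ)/dm`. -/
noncomputable def fiberR (m : Measure (SigmaA N A))
    (μ : Measure (SigmaA N A × K)) (γ : SigmaA N A) : Measure K := by
  by_cases h : IsFiniteMeasure μ
  · haveI := h
    exact (μ.fst.rnDeriv m γ) • μ.condKernel γ
  · exact 0

/-- The norm `‖μ‖_∞ = ess sup_γ ‖μ|_γ‖_W` of a signed measure written as a
difference `μ = μ₁ - μ₂` of positive measures. -/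
noncomputable def infNormPair (m : Measure (SigmaA N A))
    (μ₁ μ₂ : Measure (SigmaA N A × K)) : ℝ≥0∞ :=
  essSup (fun γ => wDist (fiberR m μ₁ γ) (fiberR m μ₂ γ)) m

/-- The marginal density `φ₁ = d(π₁_*μ)/dm` of the signed measure `μ = μ₁ - μ₂`. -/
noncomputable def phiPair (m : Measure (SigmaA N A))
    (μ₁ μ₂ : Measure (SigmaA N A × K)) (γ : SigmaA N A) : ℝ :=
  (μ₁.fst.rnDeriv m γ).toReal - (μ₂.fst.rnDeriv m γ).toReal

/-- Membership in `AB`: both parts are finite with first marginal absolutely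
continuous with respect to `m`. -/
def MemABPair (m : Measure (SigmaA N A)) (μ₁ μ₂ : Measure (SigmaA N A × K)) : Prop :=
  μ₁.fst ≪ m ∧ μ₂.fst ≪ m ∧ IsFiniteMeasure μ₁ ∧ IsFiniteMeasure μ₂

/-- Membership in `S^∞`: `μ ∈ AB`, `‖μ‖_∞ < ∞` and the marginal density `φ₁`
has a `d_θ`-Lipschitz version. -/
def MemSPair (m : Measure (SigmaA N A)) (θ : ℝ)
    (μ₁ μ₂ : Measure (SigmaA N A × K)) : Prop :=
  MemABPair m μ₁ μ₂ ∧ infNormPair m μ₁ μ₂ < ⊤ ∧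
    ∃ ψ : SigmaA N A → ℝ, ψ =ᵐ[m] phiPair m μ₁ μ₂ ∧ LipD (dTheta θ) ψ

/-- `‖φ₁‖_θ`, computed on the best version of the marginal density. -/
noncomputable def thetaNormMu (m : Measure (SigmaA N A)) (θ : ℝ)
    (μ₁ μ₂ : Measure (SigmaA N A × K)) : ℝ≥0∞ :=
  ⨅ ψ : {ψ : SigmaA N A → ℝ // ψ =ᵐ[m] phiPair m μ₁ μ₂}, thetaNorm (dTheta θ) ψ.val

/-- The norm `‖μ‖_{S^∞} = ‖φ₁‖_θ + ‖μ‖_∞`. -/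
noncomputable def sNormPair (m : Measure (SigmaA N A)) (θ : ℝ)
    (μ₁ μ₂ : Measure (SigmaA N A × K)) : ℝ≥0∞ :=
  thetaNormMu m θ μ₁ μ₂ + infNormPair m μ₁ μ₂

/-- Positive part of a signed measure. -/
noncomputable def jPos {X : Type*} [MeasurableSpace X] (μ : SignedMeasure X) : Measure X :=
  μ.toJordanDecomposition.posPart

/-- Negative part of a signed measure. -/
noncomputable def jNeg {X : Type*} [MeasurableSpace X] (μ : SignedMeasure X) : Measure X :=
  μ.toJordanDecomposition.negPart

/-- Membership in `AB` for signed measures. -/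
def MemAB (m : Measure (SigmaA N A)) (μ : SignedMeasure (SigmaA N A × K)) : Prop :=
  MemABPair m (jPos μ) (jNeg μ)

/-- Membership in `S^∞` for signed measures. -/
def MemS (m : Measure (SigmaA N A)) (θ : ℝ) (μ : SignedMeasure (SigmaA N A × K)) : Prop :=
  MemSPair m θ (jPos μ) (jNeg μ)

/-- `‖μ‖_∞` for signed measures. -/
noncomputable def infNorm (m : Measure (SigmaA N A))
    (μ : SignedMeasure (SigmaA N A × K)) : ℝ≥0∞ :=
  infNormPair m (jPos μ) (jNeg μ)

/-- `‖μ‖_{S^∞}` for signed measures. -/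
noncomputable def sNorm (m : Measure (SigmaA N A)) (θ : ℝ)
    (μ : SignedMeasure (SigmaA N A × K)) : ℝ≥0∞ :=
  sNormPair m θ (jPos μ) (jNeg μ)

/-- `‖φ₁‖_∞` of the marginal density of a signed measure. -/
noncomputable def phiSup (m : Measure (SigmaA N A))
    (μ : SignedMeasure (SigmaA N A × K)) : ℝ≥0∞ :=
  essSup (fun γ => ENNReal.ofReal |phiPair m (jPos μ) (jNeg μ) γ|) m

/-!
Write `w_i(γ)` for the weight `1_{σ([i])}(γ) g_i(iγ)`. Invariance of `m` and the Jacobian identity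
give `∑ i, w_i ≤ 1` almost everywhere, so the transferred path is a sub-convex combination of
pushforwards. If `x` and `y` start with the same symbol then the same branches occur at both, and
the difference of the `i`-th terms splits into three parts: the change of the fiber measure, at
distance `d_θ(ix, iy) = θ d_θ(x, y)` and not increased by the nonexpansive fiber map; the change of
the fiber map, bounded by (G2); and the change of the weight, bounded by the Lipschitz constant of
`g_i`. Only the last part is not averaged by the weights, whence the factor `N`. If the first
symbols differ then `d_θ(x, y) ≥ 1`, and the total masses, each at most `‖μ‖_∞`, give the
constant `2`.
-/

open scoped NNReal

section WDist

variable {Ω X Y : Type*} [MeasurableSpace Ω] [MetricSpace X] [MeasurableSpace X] [MetricSpace Y]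
  [MeasurableSpace Y]

theorem enorm_integral_le_measure_univ (ν : Measure Ω) {h : Ω → ℝ}
    (hb : ∀ z, |h z| ≤ 1) : ‖∫ z, h z ∂ν‖ₑ ≤ ν univ := by
  calc ‖∫ z, h z ∂ν‖ₑ ≤ ∫⁻ z, ‖h z‖ₑ ∂ν := enorm_integral_le_lintegral_enorm h
    _ ≤ ∫⁻ _, 1 ∂ν := lintegral_mono fun z => by
      rw [Real.enorm_eq_ofReal_abs]
      exact ENNReal.ofReal_le_one.2 (hb z)
    _ = ν univ := lintegral_one

theorem enorm_integral_sub_le_wDist (ν₁ ν₂ : Measure X) {h : X → ℝ} (hl : LipschitzWith 1 h)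
    (hb : ∀ z, |h z| ≤ 1) : ‖∫ z, h z ∂ν₁ - ∫ z, h z ∂ν₂‖ₑ ≤ wDist ν₁ ν₂ := by
  rw [Real.enorm_eq_ofReal_abs]
  exact le_iSup_of_le ⟨h, hl, hb⟩ le_rfl

theorem wDist_le {ν₁ ν₂ : Measure X} {C : ℝ≥0∞}
    (hC : ∀ h : X → ℝ, LipschitzWith 1 h → (∀ z, |h z| ≤ 1) →
      ‖∫ z, h z ∂ν₁ - ∫ z, h z ∂ν₂‖ₑ ≤ C) : wDist ν₁ ν₂ ≤ C :=
  iSup_le fun ⟨h, hl, hb⟩ => Real.enorm_eq_ofReal_abs _ ▸ hC h hl hb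

theorem wDist_self (ν : Measure X) : wDist ν ν = 0 := by simp [wDist]

theorem wDist_triangle (ν₁ ν₂ ν₃ : Measure X) : wDist ν₁ ν₃ ≤ wDist ν₁ ν₂ + wDist ν₂ ν₃ :=
  wDist_le fun h hl hb => by
    rw [← sub_add_sub_cancel _ (∫ z, h z ∂ν₂)]
    exact (enorm_add_le _ _).trans (add_le_add (enorm_integral_sub_le_wDist _ _ hl hb)
      (enorm_integral_sub_le_wDist _ _ hl hb))

theorem wDist_le_measure_univ_add (ν₁ ν₂ : Measure X) : wDist ν₁ ν₂ ≤ ν₁ univ + ν₂ univ :=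
  wDist_le fun _ _ hb => enorm_sub_le.trans
    (add_le_add (enorm_integral_le_measure_univ ν₁ hb) (enorm_integral_le_measure_univ ν₂ hb))

theorem wDist_zero_right (ν : Measure X) [IsFiniteMeasure ν] : wDist ν 0 = ν univ := by
  refine le_antisymm (by simpa using wDist_le_measure_univ_add ν 0) ?_
  simpa [Measure.real, Real.enorm_eq_ofReal_abs] using
    enorm_integral_sub_le_wDist ν 0 (h := fun _ => 1) (.const' 1) fun _ => abs_one.le

theorem wDist_smul (c : ℝ≥0) (ν₁ ν₂ : Measure X) :
    wDist (c • ν₁) (c • ν₂) = c * wDist ν₁ ν₂ := by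
  simp_rw [wDist, ENNReal.mul_iSup, integral_smul_nnreal_measure, ← smul_sub, NNReal.smul_def,
    smul_eq_mul, abs_mul, NNReal.abs_eq, ENNReal.ofReal_mul c.coe_nonneg,
    ENNReal.ofReal_coe_nnreal]

theorem wDist_smul_smul_self (a b : ℝ≥0) (ν : Measure X) [IsFiniteMeasure ν] :
    wDist (a • ν) (b • ν) = edist a b * ν univ := by
  rw [← wDist_zero_right ν, edist_dist]
  simp_rw [wDist, ENNReal.mul_iSup, integral_smul_nnreal_measure, NNReal.smul_def,
    ← sub_smul, smul_eq_mul, abs_mul, ← NNReal.dist_eq, ENNReal.ofReal_mul dist_nonneg,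
    integral_zero_measure, sub_zero]

theorem integrable_of_lipschitzWith_of_abs_le_one [OpensMeasurableSpace X] (ν : Measure X)
    [IsFiniteMeasure ν] {h : X → ℝ} (hl : LipschitzWith 1 h) (hb : ∀ z, |h z| ≤ 1) :
    Integrable h ν :=
  .of_bound hl.continuous.aestronglyMeasurable 1 (.of_forall hb)

theorem wDist_sum_le [OpensMeasurableSpace X] {ι : Type*} (s : Finset ι) (ν₁ ν₂ : ι → Measure X)
    [∀ i, IsFiniteMeasure (ν₁ i)] [∀ i, IsFiniteMeasure (ν₂ i)] :
    wDist (∑ i ∈ s, ν₁ i) (∑ i ∈ s, ν₂ i) ≤ ∑ i ∈ s, wDist (ν₁ i) (ν₂ i) :=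
  wDist_le fun h hl hb => by
    rw [integral_finsetSum_measure fun _ _ => integrable_of_lipschitzWith_of_abs_le_one _ hl hb,
      integral_finsetSum_measure fun _ _ => integrable_of_lipschitzWith_of_abs_le_one _ hl hb,
      ← Finset.sum_sub_distrib]
    exact (enorm_sum_le _ _).trans
      (Finset.sum_le_sum fun _ _ => enorm_integral_sub_le_wDist _ _ hl hb)

theorem wDist_map_le [OpensMeasurableSpace X] [BorelSpace Y] {f : X → Y} (hf : LipschitzWith 1 f)
    (ν₁ ν₂ : Measure X) : wDist (ν₁.map f) (ν₂.map f) ≤ wDist ν₁ ν₂ :=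
  wDist_le fun h hl hb => by
    have hfm := hf.continuous.measurable
    rw [integral_map hfm.aemeasurable hl.continuous.aestronglyMeasurable,
      integral_map hfm.aemeasurable hl.continuous.aestronglyMeasurable]
    exact enorm_integral_sub_le_wDist _ _ (mul_one (1 : ℝ≥0) ▸ hl.comp hf) fun z => hb (f z)

theorem wDist_map_map_self_le [OpensMeasurableSpace Y] {f g : Ω → Y} (hf : Measurable f)
    (hg : Measurable g) {C : ℝ≥0∞} (hC : ∀ z, edist (f z) (g z) ≤ C) (ν : Measure Ω)
    [IsFiniteMeasure ν] : wDist (ν.map f) (ν.map g) ≤ C * ν univ :=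
  wDist_le fun h hl hb => by
    have hint {k : Ω → Y} (hk : Measurable k) : Integrable (fun z => h (k z)) ν :=
      (integrable_of_lipschitzWith_of_abs_le_one (ν.map k) hl hb).comp_measurable hk
    rw [integral_map hf.aemeasurable hl.continuous.aestronglyMeasurable,
      integral_map hg.aemeasurable hl.continuous.aestronglyMeasurable,
      ← integral_sub (hint hf) (hint hg)]
    calc ‖∫ z, h (f z) - h (g z) ∂ν‖ₑ
        ≤ ∫⁻ z, ‖h (f z) - h (g z)‖ₑ ∂ν := enorm_integral_le_lintegral_enorm _
      _ ≤ ∫⁻ _, C ∂ν := lintegral_mono fun z => by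
        rw [← edist_eq_enorm_sub]
        exact (by simpa using hl (f z) (g z) : _ ≤ edist (f z) (g z)).trans (hC z)
      _ = C * ν univ := lintegral_const C

theorem wDist_smul_map_smul_map_le [OpensMeasurableSpace X] [BorelSpace Y] {f g : X → Y}
    (hf : LipschitzWith 1 f) (hg : Measurable g) {C : ℝ≥0∞} (hC : ∀ z, edist (f z) (g z) ≤ C)
    (a b : ℝ≥0) (ν₁ ν₂ : Measure X) [IsFiniteMeasure ν₂] :
    wDist (a • ν₁.map f) (b • ν₂.map g) ≤
      a * (wDist ν₁ ν₂ + C * ν₂ univ) + edist a b * ν₂ univ := by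
  calc wDist (a • ν₁.map f) (b • ν₂.map g)
      ≤ wDist (a • ν₁.map f) (a • ν₂.map g) + wDist (a • ν₂.map g) (b • ν₂.map g) :=
        wDist_triangle _ _ _
    _ = a * wDist (ν₁.map f) (ν₂.map g) + edist a b * ν₂ univ := by
        rw [wDist_smul, wDist_smul_smul_self, Measure.map_apply hg .univ, preimage_univ]
    _ ≤ a * (wDist ν₁ ν₂ + C * ν₂ univ) + edist a b * ν₂ univ := by
        gcongr
        exact (wDist_triangle _ (ν₂.map f) _).trans (add_le_add (wDist_map_le hf _ _)
          (wDist_map_map_self_le hf.continuous.measurable hg hC _))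

end WDist

section Metric

variable {θ : ℝ}

theorem dTheta_term_nonneg (hθ0 : 0 ≤ θ) (x y : SigmaA N A) (n : ℕ) :
    0 ≤ θ ^ n * (if x.val n = y.val n then (0 : ℝ) else 1) := by
  split_ifs <;> positivity

theorem dTheta_term_le (hθ0 : 0 ≤ θ) (x y : SigmaA N A) (n : ℕ) :
    θ ^ n * (if x.val n = y.val n then (0 : ℝ) else 1) ≤ θ ^ n :=
  mul_le_of_le_one_right (by positivity) (by split_ifs <;> norm_num)

theorem summable_dTheta (hθ0 : 0 ≤ θ) (hθ1 : θ < 1) (x y : SigmaA N A) :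
    Summable fun n : ℕ => θ ^ n * (if x.val n = y.val n then (0 : ℝ) else 1) :=
  .of_nonneg_of_le (dTheta_term_nonneg hθ0 x y) (dTheta_term_le hθ0 x y)
    (summable_geometric_of_lt_one hθ0 hθ1)

theorem dTheta_self (θ : ℝ) (x : SigmaA N A) : dTheta θ x x = 0 := by simp [dTheta]

theorem pow_le_dTheta (hθ0 : 0 ≤ θ) (hθ1 : θ < 1) {x y : SigmaA N A} {n : ℕ}
    (h : x.val n ≠ y.val n) : θ ^ n ≤ dTheta θ x y := by
  simpa [h, dTheta] using
    (summable_dTheta hθ0 hθ1 x y).le_tsum n fun k _ => dTheta_term_nonneg hθ0 x y k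

theorem dTheta_pos (hθ0 : 0 < θ) (hθ1 : θ < 1) {x y : SigmaA N A} (h : x ≠ y) :
    0 < dTheta θ x y := by
  obtain ⟨n, hn⟩ := Function.ne_iff.1 (Subtype.coe_ne_coe.2 h)
  exact (pow_pos hθ0 n).trans_le (pow_le_dTheta hθ0.le hθ1 hn)

theorem dTheta_prepend (hθ0 : 0 ≤ θ) (hθ1 : θ < 1) {i : Fin N} {x y : SigmaA N A}
    (hx : A i (x.val 0) = true) (hy : A i (y.val 0) = true) :
    dTheta θ (prepend i x hx) (prepend i y hy) = θ * dTheta θ x y := by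
  rw [dTheta, (summable_dTheta hθ0 hθ1 _ _).tsum_eq_zero_add]
  simp only [dTheta, prepend, ← tsum_mul_left, if_true, mul_zero, zero_add, pow_succ', mul_assoc]
  rfl

theorem continuous_dTheta_left (hθ0 : 0 ≤ θ) (hθ1 : θ < 1) (y : SigmaA N A) :
    Continuous fun x => dTheta θ x y := by
  refine continuous_tsum (fun n => ?_) (summable_geometric_of_lt_one hθ0 hθ1) fun n x => ?_
  · have hterm : Continuous fun j : Fin N => θ ^ n * (if j = y.val n then (0 : ℝ) else 1) :=
      continuous_of_discreteTopology
    exact hterm.comp ((continuous_apply n).comp continuous_subtype_val)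
  · rw [Real.norm_of_nonneg (dTheta_term_nonneg hθ0 x y n)]
    exact dTheta_term_le hθ0 x y n

theorem LipWithD.continuous (hθ0 : 0 ≤ θ) (hθ1 : θ < 1) {L : ℝ} {f : SigmaA N A → ℝ}
    (hf : LipWithD (dTheta θ) L f) : Continuous f :=
  continuous_iff_continuousAt.2 fun x => tendsto_iff_dist_tendsto_zero.2 <|
    squeeze_zero (fun _ => dist_nonneg) (fun y => hf y x) <| by
      simpa [dTheta_self] using ((continuous_dTheta_left hθ0 hθ1 x).const_mul L).tendsto x

end Metric

section InverseBranch

theorem measurable_symbol (n : ℕ) : Measurable fun x : SigmaA N A => x.val n :=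
  (measurable_pi_apply n).comp measurable_subtype_coe

theorem measurable_shift : Measurable (shift : SigmaA N A → SigmaA N A) :=
  (measurable_pi_lambda _ fun n => measurable_symbol (n + 1)).subtype_mk

/-- The cylinder `[i]`. -/
def symbolCylinder (A : Fin N → Fin N → Bool) (i : Fin N) : Set (SigmaA N A) :=
  {x | x.val 0 = i}

/-- The image `σ([i])` of the cylinder `[i]`, on which the inverse branch `γ ↦ iγ` is defined. -/
def branchDomain (A : Fin N → Fin N → Bool) (i : Fin N) : Set (SigmaA N A) :=
  {x | A i (x.val 0) = true}

theorem measurableSet_symbolCylinder (i : Fin N) : MeasurableSet (symbolCylinder A i) :=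
  measurable_symbol 0 (.singleton i)

theorem measurableSet_branchDomain (i : Fin N) : MeasurableSet (branchDomain A i) :=
  measurable_symbol 0 (.of_discrete (s := {j | A i j = true}))

/-- The inverse branch `γ ↦ iγ` of `σ` over the cylinder `[i]`, extended by the identity outside
`σ([i])`: a total map which, like the branch itself, pulls null sets back to null sets. -/
noncomputable def inverseBranch (i : Fin N) (x : SigmaA N A) : SigmaA N A :=
  if h : A i (x.val 0) = true then prepend i x h else x

theorem inverseBranch_of_allowed {i : Fin N} {x : SigmaA N A} (h : A i (x.val 0) = true) :
    inverseBranch i x = prepend i x h :=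
  dif_pos h

theorem inverseBranch_of_not_allowed {i : Fin N} {x : SigmaA N A} (h : ¬A i (x.val 0) = true) :
    inverseBranch i x = x :=
  dif_neg h

theorem shift_inverseBranch {i : Fin N} {x : SigmaA N A} (h : A i (x.val 0) = true) :
    shift (inverseBranch i x) = x := by
  rw [inverseBranch_of_allowed h]
  rfl

theorem dTheta_inverseBranch {θ : ℝ} (hθ0 : 0 ≤ θ) (hθ1 : θ < 1) {i : Fin N} {x y : SigmaA N A}
    (hx : A i (x.val 0) = true) (hy : A i (y.val 0) = true) :
    dTheta θ (inverseBranch i x) (inverseBranch i y) = θ * dTheta θ x y := by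
  rw [inverseBranch_of_allowed hx, inverseBranch_of_allowed hy, dTheta_prepend hθ0 hθ1]

theorem measurable_inverseBranch (i : Fin N) :
    Measurable (inverseBranch i : SigmaA N A → SigmaA N A) := by
  have hprepend : Measurable fun x : branchDomain A i => prepend i x.1 x.2 := by
    refine (measurable_pi_lambda _ fun n => ?_).subtype_mk
    cases n with
    | zero => exact measurable_const
    | succ n => exact (measurable_symbol n).comp measurable_subtype_coe
  let _ : DecidablePred (· ∈ branchDomain A i) := fun x =>
    inferInstanceAs (Decidable (A i (x.val 0) = true))
  exact Measurable.dite (s := branchDomain A i) hprepend measurable_subtype_coe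
    (measurableSet_branchDomain i)

variable {m : Measure (SigmaA N A)} {Jm : Fin N → SigmaA N A → ℝ}

theorem IsJacobian.map_inverseBranch (hJ : IsJacobian m Jm) (i : Fin N) :
    (m.restrict (branchDomain A i)).map (inverseBranch i) =
      (m.restrict (symbolCylinder A i)).withDensity fun x => ENNReal.ofReal (Jm i x) := by
  ext E hE
  rw [Measure.map_apply (measurable_inverseBranch i) hE, withDensity_apply _ hE,
    Measure.restrict_apply (measurable_inverseBranch i hE), Measure.restrict_restrict hE]
  refine Eq.trans (congrArg m (Set.ext fun γ => ?_)) (hJ i E hE)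
  refine ⟨fun ⟨hE, hγ⟩ => ⟨hγ, inverseBranch_of_allowed hγ ▸ hE⟩, fun ⟨hγ, hE⟩ => ⟨?_, hγ⟩⟩
  rwa [mem_preimage, inverseBranch_of_allowed hγ]

theorem IsJacobian.quasiMeasurePreserving_inverseBranch (hJ : IsJacobian m Jm) (i : Fin N) :
    Measure.QuasiMeasurePreserving (inverseBranch i) m m := by
  refine ⟨measurable_inverseBranch i, .mk fun E hE hE0 => ?_⟩
  rw [Measure.map_apply (measurable_inverseBranch i) hE]
  refine measure_mono_null (t := inverseBranch i ⁻¹' E ∩ branchDomain A i ∪ E) (fun γ hγ => ?_)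
    (measure_union_null ?_ hE0)
  · by_cases h : A i (γ.val 0) = true
    · exact .inl ⟨hγ, h⟩
    · exact .inr (inverseBranch_of_not_allowed h ▸ hγ)
  · rw [← Measure.restrict_apply (measurable_inverseBranch i hE),
      ← Measure.map_apply (measurable_inverseBranch i) hE, hJ.map_inverseBranch i]
    exact (withDensity_absolutelyContinuous _ _).trans Measure.absolutelyContinuous_restrict hE0

theorem IsJacobian.ae_inverseBranch (hJ : IsJacobian m Jm) {p : SigmaA N A → Prop}
    (hp : ∀ᵐ γ ∂m, p γ) : ∀ᵐ γ ∂m, ∀ i, p (inverseBranch i γ) :=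
  ae_all_iff.2 fun i => (hJ.quasiMeasurePreserving_inverseBranch i).ae hp

theorem IsJacobian.ae_prod_inverseBranch [SFinite m] (hJ : IsJacobian m Jm)
    {p : SigmaA N A × SigmaA N A → Prop} (hp : ∀ᵐ q ∂m.prod m, p q) :
    ∀ᵐ q ∂m.prod m, ∀ i, p (inverseBranch i q.1, inverseBranch i q.2) :=
  ae_all_iff.2 fun i =>
    (QuasiMeasurePreserving.prodMap (hJ.quasiMeasurePreserving_inverseBranch i)
      (hJ.quasiMeasurePreserving_inverseBranch i)).ae hp

theorem IsJacobian.setLIntegral_comp_inverseBranch (hJ : IsJacobian m Jm) {i : Fin N}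
    (hJm : Measurable (Jm i)) {f : SigmaA N A → ℝ≥0∞} (hf : Measurable f) :
    ∫⁻ γ in branchDomain A i, f (inverseBranch i γ) ∂m =
      ∫⁻ x in symbolCylinder A i, ENNReal.ofReal (Jm i x) * f x ∂m := by
  rw [← lintegral_map hf (measurable_inverseBranch i), hJ.map_inverseBranch i,
    lintegral_withDensity_eq_lintegral_mul _ hJm.ennreal_ofReal hf]
  rfl

end InverseBranch

section BranchWeight

/-- The weight `1_{σ([i])}(γ) g_i(iγ)` of the `i`-th branch in the transfer formula, where
`g_i = 1 / J_{m,σ_i}`. -/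
noncomputable def branchWeight (Jm : Fin N → SigmaA N A → ℝ) (i : Fin N) (γ : SigmaA N A) : ℝ≥0 :=
  if A i (γ.val 0) = true then ((Jm i (inverseBranch i γ))⁻¹).toNNReal else 0

variable {m : Measure (SigmaA N A)} {Jm : Fin N → SigmaA N A → ℝ}

theorem measurable_branchWeight {i : Fin N} (hJm : Measurable (Jm i)) :
    Measurable (branchWeight Jm i) :=
  .ite (measurableSet_branchDomain i)
    (hJm.inv.comp (measurable_inverseBranch i)).real_toNNReal measurable_const

theorem edist_branchWeight_le {θ gLip : ℝ} (hθ0 : 0 ≤ θ) (hθ1 : θ < 1) {i : Fin N}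
    (hg : LipWithD (dTheta θ) gLip fun x => (Jm i x)⁻¹) {x y : SigmaA N A}
    (hx : A i (x.val 0) = true) (hy : A i (y.val 0) = true) :
    edist (branchWeight Jm i x) (branchWeight Jm i y) ≤
      ENNReal.ofReal (gLip * (θ * dTheta θ x y)) := by
  rw [branchWeight, if_pos hx, branchWeight, if_pos hy]
  refine (Real.lipschitzWith_toNNReal.edist_le_mul _ _).trans ?_
  rw [ENNReal.coe_one, one_mul, edist_dist, Real.dist_eq, ← dTheta_inverseBranch hθ0 hθ1 hx hy]
  exact ENNReal.ofReal_le_ofReal (hg _ _)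

theorem setLIntegral_branchWeight_le (hJ : IsJacobian m Jm) {i : Fin N} (hJm : Measurable (Jm i))
    {E : Set (SigmaA N A)} (hE : MeasurableSet E) :
    ∫⁻ γ in E, branchWeight Jm i γ ∂m ≤ m (shift ⁻¹' E ∩ symbolCylinder A i) := by
  have hE' : MeasurableSet (shift ⁻¹' E : Set (SigmaA N A)) := measurable_shift hE
  set f : SigmaA N A → ℝ≥0∞ := (shift ⁻¹' E).indicator fun x => ENNReal.ofReal (Jm i x)⁻¹
  have hweight : E.indicator (fun γ => (branchWeight Jm i γ : ℝ≥0∞)) =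
      (branchDomain A i).indicator fun γ => f (inverseBranch i γ) := by
    funext γ
    by_cases hγ : A i (γ.val 0) = true
    · by_cases hγE : γ ∈ E <;>
        simp [f, branchDomain, branchWeight, shift_inverseBranch hγ, ENNReal.ofReal, hγ, hγE]
    · simp [branchDomain, branchWeight, hγ]
  calc ∫⁻ γ in E, branchWeight Jm i γ ∂m
      = ∫⁻ γ in branchDomain A i, f (inverseBranch i γ) ∂m := by
        rw [← lintegral_indicator hE, hweight, lintegral_indicator (measurableSet_branchDomain i)]
    _ = ∫⁻ x in symbolCylinder A i, ENNReal.ofReal (Jm i x) * f x ∂m :=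
        hJ.setLIntegral_comp_inverseBranch hJm (hJm.inv.ennreal_ofReal.indicator hE')
    _ ≤ ∫⁻ x in symbolCylinder A i, (shift ⁻¹' E).indicator 1 x ∂m := by
        refine lintegral_mono fun x => ?_
        by_cases hx : x ∈ shift ⁻¹' E
        · rcases le_or_gt (Jm i x) 0 with hJx | hJx
          · simp [ENNReal.ofReal_of_nonpos hJx]
          · simp [f, hx, ← ENNReal.ofReal_mul hJx.le, mul_inv_cancel₀ hJx.ne']
        · simp [f, hx]
    _ = m (shift ⁻¹' E ∩ symbolCylinder A i) := by
        rw [lintegral_indicator_one hE', Measure.restrict_apply hE']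

theorem ae_sum_branchWeight_le_one [SigmaFinite m] (hinv : m.map shift = m)
    (hJ : IsJacobian m Jm) (hJm : ∀ i, Measurable (Jm i)) :
    ∀ᵐ γ ∂m, ∑ i, branchWeight Jm i γ ≤ 1 := by
  have hw (i : Fin N) : Measurable fun γ => (branchWeight Jm i γ : ℝ≥0∞) :=
    (measurable_branchWeight (hJm i)).coe_nnreal_ennreal
  have hsum : ∀ᵐ γ ∂m, ∑ i, (branchWeight Jm i γ : ℝ≥0∞) ≤ 1 := by
    refine ae_le_of_forall_setLIntegral_le_of_sigmaFinite
      (Finset.measurable_sum _ fun i _ => hw i) fun E hE _ => ?_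
    have hE' : MeasurableSet (shift ⁻¹' E : Set (SigmaA N A)) := measurable_shift hE
    calc ∫⁻ γ in E, ∑ i, (branchWeight Jm i γ : ℝ≥0∞) ∂m
        = ∑ i, ∫⁻ γ in E, branchWeight Jm i γ ∂m := lintegral_finsetSum _ fun i _ => hw i
      _ ≤ ∑ i, m (shift ⁻¹' E ∩ symbolCylinder A i) :=
          Finset.sum_le_sum fun i _ => setLIntegral_branchWeight_le hJ (hJm i) hE
      _ = m (⋃ i ∈ Finset.univ, shift ⁻¹' E ∩ symbolCylinder A i) :=
          (measure_biUnion_finset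
            (fun i _ j _ hij => disjoint_left.2 fun x hi hj => hij (hi.2.symm.trans hj.2))
            fun i _ => hE'.inter (measurableSet_symbolCylinder i)).symm
      _ ≤ m (shift ⁻¹' E) := measure_mono (iUnion₂_subset fun i _ => inter_subset_left)
      _ = ∫⁻ _ in E, 1 ∂m := by
          rw [setLIntegral_one, ← Measure.map_apply measurable_shift hE, hinv]
  filter_upwards [hsum] with γ hγ
  exact_mod_cast hγ

end BranchWeight

section PathLip

variable {X : Type*} [MeasurableSpace X] {m : Measure (SigmaA N A)} {T : SigmaA N A → Measure X}

theorem IsDisint.ae_isFiniteMeasure {μ : Measure (SigmaA N A × X)} [IsFiniteMeasure μ]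
    (hT : IsDisint m μ T) : ∀ᵐ γ ∂m, IsFiniteMeasure (T γ) := by
  have hmass : ∫⁻ γ, T γ univ ∂m ≠ ⊤ := by
    simpa using (hT.1 univ .univ).symm.trans_ne (measure_ne_top μ univ)
  filter_upwards [ae_lt_top (hT.2 univ .univ) hmass] with γ hγ using ⟨hγ⟩

variable [MetricSpace X] {θ : ℝ}

theorem ae_wDist_le_pathLip_mul (hθ0 : 0 < θ) (hθ1 : θ < 1) :
    ∀ᵐ q ∂m.prod m, wDist (T q.1) (T q.2) ≤
      pathLip m θ T * ENNReal.ofReal (dTheta θ q.1 q.2) := by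
  filter_upwards [ENNReal.ae_le_essSup (μ := m.prod m) fun q : SigmaA N A × SigmaA N A =>
    wDist (T q.1) (T q.2) / ENNReal.ofReal (dTheta θ q.1 q.2)] with ⟨x, y⟩ hq
  by_cases hxy : x = y
  · simp [hxy, wDist_self]
  · exact (ENNReal.div_le_iff (ENNReal.ofReal_pos.2 (dTheta_pos hθ0 hθ1 hxy)).ne'
      ENNReal.ofReal_ne_top).1 hq

theorem pathLip_le_of_ae {C : ℝ≥0∞}
    (h : ∀ᵐ q ∂m.prod m, wDist (T q.1) (T q.2) ≤ C * ENNReal.ofReal (dTheta θ q.1 q.2)) :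
    pathLip m θ T ≤ C :=
  essSup_le_of_ae_le C (h.mono fun _ hq => ENNReal.div_le_of_le_mul hq)

theorem ae_measure_univ_le_essSup_wDist (hT : ∀ᵐ γ ∂m, IsFiniteMeasure (T γ)) :
    ∀ᵐ γ ∂m, T γ univ ≤ essSup (fun γ => wDist (T γ) 0) m := by
  filter_upwards [hT, ENNReal.ae_le_essSup (μ := m) fun γ => wDist (T γ) 0] with γ hfin hγ
  rwa [wDist_zero_right] at hγ

end PathLip

section FiberMaps

variable {X : Type*} [MetricSpace X] {G : SigmaA N A × X → X}

theorem CondG1.mono {α β : ℝ} (hG1 : CondG1 G α) (hαβ : α ≤ β) : CondG1 G β :=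
  fun x z₁ z₂ => (hG1 x z₁ z₂).trans (by gcongr)

theorem CondG1.lipschitzWith (hG1 : CondG1 G 1) (x : SigmaA N A) :
    LipschitzWith 1 fun z => G (x, z) :=
  .of_dist_le_mul fun z₁ z₂ => by simpa using hG1 x z₁ z₂

theorem CondG2.edist_le {θ H : ℝ} (hG2 : CondG2 θ G H) (z : X) (x y : SigmaA N A) :
    edist (G (x, z)) (G (y, z)) ≤ ENNReal.ofReal (H * dTheta θ x y) := by
  rw [edist_dist]
  exact ENNReal.ofReal_le_ofReal (hG2 z x y)

theorem CondG2.mul_dTheta_nonneg [Nonempty X] {θ H : ℝ} (hG2 : CondG2 θ G H)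
    (x y : SigmaA N A) : 0 ≤ H * dTheta θ x y :=
  dist_nonneg.trans (hG2 (Classical.arbitrary X) x y)

end FiberMaps

section TransferPath

variable {X : Type*} [MeasurableSpace X] {m : Measure (SigmaA N A)} {M : ℝ≥0∞}
  {G : SigmaA N A × X → X} {Jm : Fin N → SigmaA N A → ℝ} {T : SigmaA N A → Measure X}

/-- The `i`-th term `1_{σ([i])}(γ) g_i(iγ) (F_{iγ})_* (T (iγ))` of the transfer formula. -/
noncomputable def branchTerm (G : SigmaA N A × X → X) (Jm : Fin N → SigmaA N A → ℝ)
    (T : SigmaA N A → Measure X) (i : Fin N) (γ : SigmaA N A) : Measure X :=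
  branchWeight Jm i γ • (T (inverseBranch i γ)).map fun z => G (inverseBranch i γ, z)

theorem branchTerm_of_not_allowed {i : Fin N} {γ : SigmaA N A} (h : ¬A i (γ.val 0) = true) :
    branchTerm G Jm T i γ = 0 := by
  rw [branchTerm, branchWeight, if_neg h, zero_smul]

theorem transferPath_eq_sum_branchTerm (γ : SigmaA N A) :
    transferPath G Jm T γ = ∑ i, branchTerm G Jm T i γ := by
  refine Finset.sum_congr rfl fun i _ => ?_
  split_ifs with h
  · rw [branchTerm, branchWeight, if_pos h, inverseBranch_of_allowed h]
    rfl
  · exact (branchTerm_of_not_allowed h).symm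

/-- The almost sure properties of a base point `γ` that control the transfer formula at `γ`: the
fiber measures `T (iγ)` are finite, of mass at most `M`, and the branch weights sum to at most
one. Finiteness is a separate condition because `M` may be infinite. -/
structure BranchBounded (Jm : Fin N → SigmaA N A → ℝ) (T : SigmaA N A → Measure X) (M : ℝ≥0∞)
    (γ : SigmaA N A) : Prop where
  isFiniteMeasure (i : Fin N) : IsFiniteMeasure (T (inverseBranch i γ))
  measure_univ_le (i : Fin N) : T (inverseBranch i γ) univ ≤ M
  sum_weight_le_one : ∑ i, branchWeight Jm i γ ≤ 1

theorem BranchBounded.sum_weight_mul_le {γ : SigmaA N A}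
    (hγ : BranchBounded Jm T M γ) (C : ℝ≥0∞) : ∑ i, branchWeight Jm i γ * C ≤ C := by
  rw [← Finset.sum_mul]
  exact mul_le_of_le_one_left' (by exact_mod_cast hγ.sum_weight_le_one)

theorem BranchBounded.isFiniteMeasure_branchTerm {γ : SigmaA N A}
    (hγ : BranchBounded Jm T M γ) (i : Fin N) : IsFiniteMeasure (branchTerm G Jm T i γ) := by
  have := hγ.isFiniteMeasure i
  unfold branchTerm
  infer_instance

variable [MetricSpace X]

theorem ae_branchBounded [SigmaFinite m] (hinv : m.map shift = m) (hJ : IsJacobian m Jm)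
    (hJm : ∀ i, Measurable (Jm i)) (hT : ∀ᵐ γ ∂m, IsFiniteMeasure (T γ)) :
    ∀ᵐ γ ∂m, BranchBounded Jm T (essSup (fun γ => wDist (T γ) 0) m) γ := by
  filter_upwards [hJ.ae_inverseBranch hT, hJ.ae_inverseBranch (ae_measure_univ_le_essSup_wDist hT),
    ae_sum_branchWeight_le_one hinv hJ hJm] with γ hfin hmass hweight
  exact ⟨hfin, hmass, hweight⟩

variable [BorelSpace X]

theorem BranchBounded.transferPath_univ_le (hG1 : CondG1 G 1) {γ : SigmaA N A}
    (hγ : BranchBounded Jm T M γ) : transferPath G Jm T γ univ ≤ M := by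
  calc transferPath G Jm T γ univ
      = ∑ i, branchWeight Jm i γ * T (inverseBranch i γ) univ := by
        rw [transferPath_eq_sum_branchTerm, Measure.finsetSum_apply]
        refine Finset.sum_congr rfl fun i _ => ?_
        rw [branchTerm, Measure.smul_apply,
          Measure.map_apply (hG1.lipschitzWith _).continuous.measurable .univ, preimage_univ]
        rfl
    _ ≤ ∑ i, branchWeight Jm i γ * M := by
        gcongr with i
        exact hγ.measure_univ_le i
    _ ≤ M := hγ.sum_weight_mul_le M

variable {θ H gLip : ℝ} {L : ℝ≥0∞} {x y : SigmaA N A}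

theorem wDist_branchTerm_le (hθ0 : 0 ≤ θ) (hθ1 : θ < 1) (hG1 : CondG1 G 1)
    (hG2 : CondG2 θ G H) {i : Fin N} (hg : LipWithD (dTheta θ) gLip fun x => (Jm i x)⁻¹)
    (hL : wDist (T (inverseBranch i x)) (T (inverseBranch i y)) ≤
      L * ENNReal.ofReal (dTheta θ (inverseBranch i x) (inverseBranch i y)))
    (hy : BranchBounded Jm T M y) (hxy : x.val 0 = y.val 0) :
    wDist (branchTerm G Jm T i x) (branchTerm G Jm T i y) ≤
      branchWeight Jm i x * (L * ENNReal.ofReal (θ * dTheta θ x y) +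
        ENNReal.ofReal (H * (θ * dTheta θ x y)) * M) +
      ENNReal.ofReal (gLip * (θ * dTheta θ x y)) * M := by
  by_cases hyi : A i (y.val 0) = true
  · have hxi : A i (x.val 0) = true := hxy ▸ hyi
    have hmap (z : X) : edist (G (inverseBranch i x, z)) (G (inverseBranch i y, z)) ≤
        ENNReal.ofReal (H * (θ * dTheta θ x y)) :=
      dTheta_inverseBranch hθ0 hθ1 hxi hyi ▸ hG2.edist_le z _ _
    have := hy.isFiniteMeasure i
    refine (wDist_smul_map_smul_map_le (hG1.lipschitzWith _)
      (hG1.lipschitzWith _).continuous.measurable hmap _ _ _ _).trans ?_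
    rw [dTheta_inverseBranch hθ0 hθ1 hxi hyi] at hL
    gcongr
    · exact hy.measure_univ_le i
    · exact edist_branchWeight_le hθ0 hθ1 hg hxi hyi
    · exact hy.measure_univ_le i
  · rw [branchTerm_of_not_allowed hyi, branchTerm_of_not_allowed (hxy ▸ hyi), wDist_self]
    exact zero_le

theorem wDist_transferPath_le_of_symbol_eq [Nonempty X] (hθ0 : 0 ≤ θ) (hθ1 : θ < 1)
    (hG1 : CondG1 G 1) (hG2 : CondG2 θ G H)
    (hg : ∀ i, LipWithD (dTheta θ) gLip fun x => (Jm i x)⁻¹)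
    (hL : ∀ i, wDist (T (inverseBranch i x)) (T (inverseBranch i y)) ≤
      L * ENNReal.ofReal (dTheta θ (inverseBranch i x) (inverseBranch i y)))
    (hx : BranchBounded Jm T M x) (hy : BranchBounded Jm T M y) (hxy : x.val 0 = y.val 0) :
    wDist (transferPath G Jm T x) (transferPath G Jm T y) ≤
      (ENNReal.ofReal θ * L + ENNReal.ofReal (H * θ + θ * N * gLip) * M) *
        ENNReal.ofReal (dTheta θ x y) := by
  set d := dTheta θ x y
  have hHd : 0 ≤ H * (θ * d) := by
    rw [mul_left_comm]
    exact mul_nonneg hθ0 (hG2.mul_dTheta_nonneg x y)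
  have hgd : 0 ≤ gLip * (θ * d) := by
    rw [mul_left_comm]
    exact mul_nonneg hθ0 ((abs_nonneg _).trans (hg (x.val 0) x y))
  have hd : 0 ≤ d := tsum_nonneg (dTheta_term_nonneg hθ0 x y)
  have hconst : ENNReal.ofReal (H * (θ * d)) + N * ENNReal.ofReal (gLip * (θ * d)) =
      ENNReal.ofReal (H * θ + θ * N * gLip) * ENNReal.ofReal d := by
    rw [← ENNReal.ofReal_mul' hd, ← ENNReal.ofReal_natCast, ← ENNReal.ofReal_mul N.cast_nonneg,
      ← ENNReal.ofReal_add hHd (mul_nonneg N.cast_nonneg hgd)]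
    congr 1
    ring
  have := hx.isFiniteMeasure_branchTerm (G := G)
  have := hy.isFiniteMeasure_branchTerm (G := G)
  calc wDist (transferPath G Jm T x) (transferPath G Jm T y)
      ≤ ∑ i, wDist (branchTerm G Jm T i x) (branchTerm G Jm T i y) := by
        simp only [transferPath_eq_sum_branchTerm]
        exact wDist_sum_le _ _ _
    _ ≤ ∑ i, (branchWeight Jm i x * (L * ENNReal.ofReal (θ * d) +
          ENNReal.ofReal (H * (θ * d)) * M) + ENNReal.ofReal (gLip * (θ * d)) * M) :=
        Finset.sum_le_sum fun i _ => wDist_branchTerm_le hθ0 hθ1 hG1 hG2 (hg i) (hL i) hy hxy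
    _ ≤ (L * ENNReal.ofReal (θ * d) + ENNReal.ofReal (H * (θ * d)) * M) +
          N * (ENNReal.ofReal (gLip * (θ * d)) * M) := by
        rw [Finset.sum_add_distrib, Finset.sum_const, Finset.card_univ, Fintype.card_fin,
          nsmul_eq_mul]
        gcongr
        exact hx.sum_weight_mul_le _
    _ = L * ENNReal.ofReal (θ * d) +
          (ENNReal.ofReal (H * (θ * d)) + N * ENNReal.ofReal (gLip * (θ * d))) * M := by ring
    _ = _ := by
        rw [hconst, ENNReal.ofReal_mul hθ0]
        ring

theorem wDist_transferPath_le_of_symbol_ne (hθ0 : 0 ≤ θ) (hθ1 : θ < 1) (hG1 : CondG1 G 1)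
    (hx : BranchBounded Jm T M x) (hy : BranchBounded Jm T M y) (hxy : x.val 0 ≠ y.val 0) :
    wDist (transferPath G Jm T x) (transferPath G Jm T y) ≤
      2 * M * ENNReal.ofReal (dTheta θ x y) := by
  have hd : 1 ≤ ENNReal.ofReal (dTheta θ x y) :=
    ENNReal.one_le_ofReal.2 (by simpa using pow_le_dTheta hθ0 hθ1 hxy)
  calc wDist (transferPath G Jm T x) (transferPath G Jm T y)
      ≤ transferPath G Jm T x univ + transferPath G Jm T y univ := wDist_le_measure_univ_add _ _
    _ ≤ M + M := add_le_add (hx.transferPath_univ_le hG1) (hy.transferPath_univ_le hG1)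
    _ = 2 * M := (two_mul M).symm
    _ ≤ 2 * M * ENNReal.ofReal (dTheta θ x y) := le_mul_of_one_le_right' hd

theorem wDist_transferPath_le [Nonempty X] (hθ0 : 0 ≤ θ) (hθ1 : θ < 1)
    (hG1 : CondG1 G 1) (hG2 : CondG2 θ G H)
    (hg : ∀ i, LipWithD (dTheta θ) gLip fun x => (Jm i x)⁻¹)
    (hL : ∀ i, wDist (T (inverseBranch i x)) (T (inverseBranch i y)) ≤
      L * ENNReal.ofReal (dTheta θ (inverseBranch i x) (inverseBranch i y)))
    (hx : BranchBounded Jm T M x) (hy : BranchBounded Jm T M y) :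
    wDist (transferPath G Jm T x) (transferPath G Jm T y) ≤
      (ENNReal.ofReal θ * L + ENNReal.ofReal (max (H * θ + θ * N * gLip) 2) * M) *
        ENNReal.ofReal (dTheta θ x y) := by
  by_cases hxy : x.val 0 = y.val 0
  · refine (wDist_transferPath_le_of_symbol_eq hθ0 hθ1 hG1 hG2 hg hL hx hy hxy).trans ?_
    gcongr
    exact le_max_left _ _
  · refine (wDist_transferPath_le_of_symbol_ne hθ0 hθ1 hG1 hx hy hxy).trans ?_
    have htwo : 2 ≤ ENNReal.ofReal (max (H * θ + θ * N * gLip) 2) :=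
      ENNReal.ofNat_le_ofReal.2 (le_max_right _ _)
    gcongr
    exact (mul_le_mul_left htwo M).trans le_add_self

end TransferPath

theorem transfer_path_lipschitz_bound_general
    {N : ℕ} {A : Fin N → Fin N → Bool} {θ : ℝ} (hθ0 : 0 < θ) (hθ1 : θ < 1)
    {m : Measure (SigmaA N A)} [SigmaFinite m] (hminv : m.map shift = m)
    {K : Type*} [MetricSpace K] [Nonempty K] [MeasurableSpace K] [BorelSpace K]
    {G : SigmaA N A × K → K} (hG1 : CondG1 G 1) {H : ℝ} (hG2 : CondG2 θ G H)
    {Jm : Fin N → SigmaA N A → ℝ} (hJ : IsJacobian m Jm)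
    {gLip : ℝ} (hgLip : ∀ i : Fin N, LipWithD (dTheta θ) gLip fun x => (Jm i x)⁻¹)
    {T : SigmaA N A → Measure K} (hT : ∀ᵐ γ ∂m, IsFiniteMeasure (T γ)) :
    pathLip m θ (transferPath G Jm T) ≤
      ENNReal.ofReal θ * pathLip m θ T +
        ENNReal.ofReal (max (H * θ + θ * (N : ℝ) * gLip) 2) *
          essSup (fun γ => wDist (T γ) 0) m := by
  have hJm (i : Fin N) : Measurable (Jm i) := by
    simpa only [Pi.inv_def, inv_inv] using ((hgLip i).continuous hθ0.le hθ1).measurable.inv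
  have hbdd := ae_branchBounded hminv hJ hJm hT
  refine pathLip_le_of_ae ?_
  filter_upwards [hJ.ae_prod_inverseBranch (ae_wDist_le_pathLip_mul (T := T) hθ0 hθ1),
    Measure.quasiMeasurePreserving_fst.ae hbdd, Measure.quasiMeasurePreserving_snd.ae hbdd]
    with q hL hx hy
  exact wDist_transferPath_le hθ0.le hθ1 hG1 hG2 hgLip hL hx hy

/-- Under (G1) and (G2), for a positive measure
`μ ∈ L_θ^+` with disintegration (path) `T`, the path `Γ^ω_{F_*μ}` of
`F^*μ` given by the transfer formula satisfies
`|Γ^ω_{F_*μ}|_θ^ω ≤ θ |μ|_θ^ω + C₁ ‖μ‖_∞`, with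
`C₁ = max{Hθ + θN|g|_θ, 2}`. -/
theorem transfer_path_lipschitz_bound
    (N : ℕ) (A : Fin N → Fin N → Bool) (hA : Aperiodic A)
    (θ : ℝ) (hθ0 : 0 < θ) (hθ1 : θ < 1)
    (m : Measure (SigmaA N A)) [IsProbabilityMeasure m]
    (hmM : IsMarkov m) (hminv : m.map shift = m)
    {K : Type*} [MetricSpace K] [CompactSpace K] [Nonempty K]
    [MeasurableSpace K] [BorelSpace K]
    (hdiam : Metric.diam (Set.univ : Set K) = 1)
    (G : SigmaA N A × K → K) (hGm : Measurable (skew G))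
    (α : ℝ) (hα0 : 0 < α) (hα1 : α < 1) (hG1 : CondG1 G α)
    (H : ℝ) (hG2 : CondG2 θ G H)
    (Jm : Fin N → SigmaA N A → ℝ) (hJ : IsJacobian m Jm)
    (gLip : ℝ) (hgLip : ∀ i : Fin N, LipWithD (dTheta θ) gLip fun x => (Jm i x)⁻¹)
    (μ : Measure (SigmaA N A × K)) [IsFiniteMeasure μ]
    (hAC : μ.fst ≪ m) (hLtheta : lipDisint m θ μ < ⊤)
    (T : SigmaA N A → Measure K) (hT : IsDisint m μ T) :
    pathLip m θ (transferPath G Jm T) ≤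
      ENNReal.ofReal θ * pathLip m θ T +
        ENNReal.ofReal (max (H * θ + θ * (N : ℝ) * gLip) 2) *
          essSup (fun γ => wDist (T γ) 0) m := by
  exact transfer_path_lipschitz_bound_general hθ0 hθ1 hminv (hG1.mono hα1.le) hG2 hJ hgLip
    hT.ae_isFiniteMeasure

end RDS
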